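/- arXiv:0705.3357 — 2 statements merged into one kernel-verified Lean document; each statement's English description precedes it below -/
import Mathlib

section
/- Let 0 < ε < 1 and let φ, φ_ε ∈ L²(ℝ) satisfy ‖φ_ε − φ‖_{L²(ℝ)} < ε. Assume ζ ↦ e^{|ζ|} φ̂(ζ) belongs to L²(ℝ). Define φ̃_ε(x) = (1/√(2π)) ∫_{|ζ| < ε^{-1/2}} φ̂_ε(ζ) e^{i ζ x} dζ. Then for almost every x ∈ ℝ, |φ̃_ε(x) − φ(x)| ≤ (1/√(2π)) [√2 · ε^{-1/4} ‖φ − φ_ε‖_{L²(ℝ)} + √(2/3) · ‖e^{|ζ|} φ̂(ζ)‖_{L²(ℝ)} · ε^{3/4}]; in particular ess sup_x |φ̃_ε(x) − φ(x)| < C₂ ε^{3/4}, where C₂ = (1/√(2π)) [√2 + √(2/3) ‖e^{|ζ|} φ̂(ζ)‖_{L²(ℝ)}]. -/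
open MeasureTheory

/-- The Fourier transform of a real-valued function on `ℝ`, with the normalization
`ĝ(ζ) = (1/√(2π)) ∫ g(x) e^{-ixζ} dx`. -/
noncomputable def ft (g : ℝ → ℝ) (ζ : ℝ) : ℂ :=
  ((1 / Real.sqrt (2 * Real.pi) : ℝ) : ℂ) *
    ∫ x : ℝ, (g x : ℂ) * Complex.exp (-(Complex.I * x * ζ))

/-- The frequency-truncated reconstruction
`φ̃_ε(x) = (1/√(2π)) ∫_{|ζ| < ε^{-1/2}} φ̂_ε(ζ) e^{iζx} dζ`. -/
noncomputable def truncRecon (φε : ℝ → ℝ) (ε : ℝ) (x : ℝ) : ℂ :=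
  ((1 / Real.sqrt (2 * Real.pi) : ℝ) : ℂ) *
    ∫ ζ in {ζ : ℝ | |ζ| < (Real.sqrt ε)⁻¹}, ft φε ζ * Complex.exp (Complex.I * ζ * x)

/-!
The idea is to split frequencies at a cutoff `R`, here `R = ε^{-1/2}`. Since `e^{|ζ|} φ̂ ∈ L²`
makes `φ̂` integrable, Fourier inversion gives
`√(2π) (φ̃_ε - φ)(x) = ∫_{|ζ| < R} (φ̂_ε - φ̂) e^{iζx} dζ - ∫_{|ζ| ≥ R} φ̂ e^{iζx} dζ` for almost
every `x`. By the Cauchy-Schwarz inequality and Plancherel's theorem the first integral is at most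
`√(2R) ‖φ_ε - φ‖`; pairing `e^{-|ζ|}` with `e^{|ζ|} φ̂`, the second is at most
`e^{-R} ‖e^{|ζ|} φ̂‖`, and `e^{-2R} ≤ (2/3) R^{-3}`.
-/

open scoped ContDiff FourierTransform SchwartzMap

section Lebesgue

variable {α E F : Type*} [MeasurableSpace α] {μ : Measure α}
  [NormedAddCommGroup E] [NormedAddCommGroup F]

lemma integral_norm_sq_eq_lpNorm_sq {f : α → E} (hf : AEStronglyMeasurable f μ) :
    ∫ a, ‖f a‖ ^ 2 ∂μ = lpNorm f 2 μ ^ 2 := by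
  have h := lpNorm_nnreal_eq_integral_norm_rpow two_ne_zero hf
  simp only [NNReal.coe_ofNat, Real.rpow_ofNat, ← one_div, ← Real.sqrt_eq_rpow,
    ENNReal.coe_ofNat] at h
  rw [h, Real.sq_sqrt (by positivity)]

lemma setIntegral_norm_mul_norm_le_sqrt_mul_sqrt {f : α → E} {g : α → F} {s : Set α}
    (hf : MemLp f 2 (μ.restrict s)) (hg : MemLp g 2 μ) :
    ∫ a in s, ‖f a‖ * ‖g a‖ ∂μ ≤ √(∫ a in s, ‖f a‖ ^ 2 ∂μ) * √(∫ a, ‖g a‖ ^ 2 ∂μ) := by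
  calc ∫ a in s, ‖f a‖ * ‖g a‖ ∂μ
      ≤ √(∫ a in s, ‖f a‖ ^ 2 ∂μ) * √(∫ a in s, ‖g a‖ ^ 2 ∂μ) := by
        simpa [Real.sqrt_eq_rpow] using integral_mul_le_Lp_mul_Lq_of_nonneg
          Real.HolderConjugate.two_two (.of_forall fun a => norm_nonneg (f a))
          (.of_forall fun a => norm_nonneg (g a)) (by simpa using hf.norm)
          (by simpa using (hg.restrict s).norm)
    _ ≤ √(∫ a in s, ‖f a‖ ^ 2 ∂μ) * √(∫ a, ‖g a‖ ^ 2 ∂μ) := by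
        gcongr
        · exact .of_forall fun _ => by positivity
        · exact hg.integrable_norm_pow two_ne_zero
        · exact Measure.restrict_le_self

lemma setIntegral_norm_le_sqrt_measureReal_mul_sqrt {f : α → E} (hf : MemLp f 2 μ) {s : Set α}
    (hs : μ s ≠ ⊤) :
    ∫ a in s, ‖f a‖ ∂μ ≤ √(μ.real s) * √(∫ a, ‖f a‖ ^ 2 ∂μ) := by
  have : IsFiniteMeasure (μ.restrict s) := isFiniteMeasure_restrict.2 hs
  simpa using setIntegral_norm_mul_norm_le_sqrt_mul_sqrt
    (memLp_const (μ := μ.restrict s) (1 : ℝ)) hf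

end Lebesgue

section Fourier

variable {V F : Type*} [NormedAddCommGroup V] [InnerProductSpace ℝ V] [FiniteDimensional ℝ V]
  [MeasurableSpace V] [BorelSpace V] [NormedAddCommGroup F]

section Normed

variable [NormedSpace ℂ F] {f : V → F}

lemma continuous_fourier_of_integrable (hf : Integrable f) : Continuous (𝓕 f) :=
  VectorFourier.fourierIntegral_continuous Real.continuous_fourierChar
    (L := innerₗ V) continuous_inner hf

lemma continuous_fourierInv_of_integrable (hf : Integrable f) : Continuous (𝓕⁻ f) :=
  VectorFourier.fourierIntegral_continuous Real.continuous_fourierChar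
    (L := -innerₗ V) continuous_inner.neg hf

variable [CompleteSpace F]

lemma integral_fourier_smul_eq_of_integrable {g : V → ℂ} (hg : Integrable g)
    (hf : Integrable f) : ∫ ξ, 𝓕 g ξ • f ξ = ∫ x, g x • 𝓕 f x := by
  simpa using! VectorFourier.integral_fourierIntegral_smul_eq_flip (L := innerₗ V)
    Real.continuous_fourierChar continuous_inner hg hf

lemma integral_fourierInv_smul_eq_of_integrable {g : V → ℂ} (hg : Integrable g)
    (hf : Integrable f) : ∫ ξ, 𝓕⁻ g ξ • f ξ = ∫ x, g x • 𝓕⁻ f x := by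
  have hflip : (-innerₗ V).flip = -innerₗ V := by ext; simp [real_inner_comm]
  simpa [hflip] using! VectorFourier.integral_fourierIntegral_smul_eq_flip (L := -innerₗ V)
    Real.continuous_fourierChar continuous_inner.neg hg hf

lemma ae_eq_of_integral_schwartz_smul_eq {f' : V → F} (hf : LocallyIntegrable f)
    (hf' : LocallyIntegrable f')
    (h : ∀ g : 𝓢(V, ℂ), ∫ x, g x • f x = ∫ x, g x • f' x) : f =ᵐ[volume] f' := by
  refine ae_eq_of_integral_contDiff_smul_eq hf hf' fun g g_smooth g_supp => ?_
  have hc : HasCompactSupport (Complex.ofRealCLM ∘ g) := g_supp.comp_left rfl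
  have hs : ContDiff ℝ ∞ (Complex.ofRealCLM ∘ g) := by fun_prop
  simpa using h (hc.toSchwartzMap hs)

lemma fourierInv_fourier_ae_eq (hf : Integrable f) (hf' : Integrable (𝓕 f)) :
    𝓕⁻ (𝓕 f) =ᵐ[volume] f := by
  refine ae_eq_of_integral_schwartz_smul_eq
    (continuous_fourierInv_of_integrable hf').locallyIntegrable hf.locallyIntegrable fun g => ?_
  calc ∫ x, g x • 𝓕⁻ (𝓕 f) x
      = ∫ ξ, (𝓕⁻ g) ξ • 𝓕 f ξ := by
        rw [← integral_fourierInv_smul_eq_of_integrable g.integrable hf',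
          SchwartzMap.fourierInv_coe]
    _ = ∫ x, 𝓕 (𝓕⁻ g) x • f x := by
        rw [← integral_fourier_smul_eq_of_integrable (𝓕⁻ g).integrable hf,
          SchwartzMap.fourier_coe]
    _ = ∫ x, g x • f x := by rw [FourierTransform.fourier_fourierInv_eq]

end Normed

section Plancherel

variable [InnerProductSpace ℂ F] [CompleteSpace F] {f : V → F}

lemma fourier_toLp_ae_eq (hf1 : Integrable f) (hf2 : MemLp f 2) :
    (𝓕 (hf2.toLp f) : Lp F 2 (volume : Measure V)) =ᵐ[volume] 𝓕 f := by
  refine ae_eq_of_integral_schwartz_smul_eq ((Lp.memLp _).locallyIntegrable one_le_two)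
    (continuous_fourier_of_integrable hf1).locallyIntegrable fun g => ?_
  calc ∫ x, g x • 𝓕 (hf2.toLp f) x
      = ∫ ξ, (𝓕 g) ξ • (hf2.toLp f) ξ := by
        simpa using DFunLike.congr_fun (Lp.fourier_toTemperedDistribution_eq (hf2.toLp f)).symm g
    _ = ∫ ξ, (𝓕 g) ξ • f ξ := by
        refine integral_congr_ae ?_
        filter_upwards [hf2.coeFn_toLp] with ξ hξ
        rw [hξ]
    _ = ∫ x, g x • 𝓕 f x := by
        rw [← integral_fourier_smul_eq_of_integrable g.integrable hf1, SchwartzMap.fourier_coe]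

lemma memLp_two_fourier (hf1 : Integrable f) (hf2 : MemLp f 2) : MemLp (𝓕 f) 2 :=
  (memLp_congr_ae (fourier_toLp_ae_eq hf1 hf2)).1 (Lp.memLp _)

lemma lpNorm_two_fourier (hf1 : Integrable f) (hf2 : MemLp f 2) :
    lpNorm (𝓕 f) 2 volume = lpNorm f 2 volume := by
  have h := Lp.norm_fourier_eq (hf2.toLp f)
  rwa [Lp.norm_def, Lp.norm_toLp, eLpNorm_congr_ae (fourier_toLp_ae_eq hf1 hf2),
    toReal_eLpNorm (memLp_two_fourier hf1 hf2).1, toReal_eLpNorm hf2.1] at h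

lemma integral_norm_sq_fourier (hf1 : Integrable f) (hf2 : MemLp f 2) :
    ∫ ξ, ‖𝓕 f ξ‖ ^ 2 = ∫ x, ‖f x‖ ^ 2 := by
  rw [integral_norm_sq_eq_lpNorm_sq (memLp_two_fourier hf1 hf2).1, lpNorm_two_fourier hf1 hf2,
    integral_norm_sq_eq_lpNorm_sq hf2.1]

end Plancherel

end Fourier

section ExponentialWeight

variable {a R : ℝ}

lemma setIntegral_comp_abs_compl (hR : 0 ≤ R) (f : ℝ → ℝ) :
    ∫ x in {x : ℝ | |x| < R}ᶜ, f |x| = 2 * ∫ x in Set.Ioi R, f x := by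
  have hmeas : MeasurableSet {x : ℝ | |x| < R} := measurableSet_lt (by fun_prop) (by fun_prop)
  have hind : ({x : ℝ | |x| < R}ᶜ).indicator (fun x => f |x|)
      = fun x => (Set.Ici R).indicator f |x| := by
    ext x
    simp [Set.indicator_apply]
  have hset : (Set.Ici R ∩ Set.Ioi 0 : Set ℝ) =ᵐ[volume] (Set.Ioi R : Set ℝ) := by
    have h := (Ioi_ae_eq_Ici (μ := volume) (a := R)).symm.inter
      (ae_eq_refl (Set.Ioi (0 : ℝ)))
    rwa [Set.Ioi_inter_Ioi, sup_of_le_left hR] at h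
  rw [← integral_indicator hmeas.compl, hind, integral_comp_abs,
    integral_indicator measurableSet_Ici, Measure.restrict_restrict measurableSet_Ici,
    setIntegral_congr_set hset]

lemma setIntegral_exp_neg_mul_abs_compl (ha : 0 < a) (hR : 0 ≤ R) :
    ∫ x in {x : ℝ | |x| < R}ᶜ, Real.exp (-a * |x|) = 2 * (Real.exp (-a * R) / a) := by
  rw [setIntegral_comp_abs_compl hR fun x => Real.exp (-a * x),
    integral_exp_mul_Ioi (neg_lt_zero.2 ha), neg_div_neg_eq]

lemma integrable_exp_neg_mul_abs (ha : 0 < a) : Integrable fun x : ℝ => Real.exp (-a * |x|) := by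
  refine .of_integral_ne_zero ?_
  have h := setIntegral_exp_neg_mul_abs_compl ha le_rfl
  simp only [(abs_nonneg _).not_gt, Set.ofPred_false, Set.compl_empty,
    setIntegral_univ] at h
  rw [h]
  positivity

variable {E : Type*} [NormedAddCommGroup E] [NormedSpace ℝ E] {u : ℝ → E}

lemma exp_neg_mul_abs_smul_exp_mul_abs_smul (a x : ℝ) (v : E) :
    Real.exp (-a * |x|) • Real.exp (a * |x|) • v = v := by
  rw [smul_smul, ← Real.exp_add, neg_mul, neg_add_cancel, Real.exp_zero, one_smul]

lemma norm_exp_neg_mul_abs_sq (a x : ℝ) :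
    ‖Real.exp (-a * |x|)‖ ^ 2 = Real.exp (-(2 * a) * |x|) := by
  rw [Real.norm_of_nonneg (Real.exp_pos _).le, ← Real.exp_nat_mul]
  congr 1
  push_cast
  ring

lemma memLp_two_exp_neg_mul_abs (ha : 0 < a) : MemLp (fun x : ℝ => Real.exp (-a * |x|)) 2 := by
  rw [memLp_two_iff_integrable_sq_norm (by fun_prop)]
  simp only [norm_exp_neg_mul_abs_sq]
  exact integrable_exp_neg_mul_abs (by positivity)

lemma integrable_of_memLp_two_exp_mul_abs_smul (ha : 0 < a)
    (hu : MemLp (fun x => Real.exp (a * |x|) • u x) 2) : Integrable u := by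
  refine (memLp_one_iff_integrable.1 (hu.smul (memLp_two_exp_neg_mul_abs ha))).congr ?_
  exact .of_forall fun x => exp_neg_mul_abs_smul_exp_mul_abs_smul a x (u x)

lemma setIntegral_norm_compl_le_exp_neg_mul_sqrt (ha : 0 < a) (hR : 0 ≤ R)
    (hu : MemLp (fun x => Real.exp (a * |x|) • u x) 2) :
    ∫ x in {x : ℝ | |x| < R}ᶜ, ‖u x‖
      ≤ Real.exp (-a * R) / √a * √(∫ x, ‖Real.exp (a * |x|) • u x‖ ^ 2) := by
  have htail : √(∫ x in {x : ℝ | |x| < R}ᶜ, ‖Real.exp (-a * |x|)‖ ^ 2)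
      = Real.exp (-a * R) / √a := by
    simp only [norm_exp_neg_mul_abs_sq]
    have hval : 2 * (Real.exp (-(2 * a) * R) / (2 * a)) = Real.exp (-a * R) ^ 2 / a := by
      rw [← Real.exp_nat_mul]
      field_simp
      ring_nf
    rw [setIntegral_exp_neg_mul_abs_compl (by positivity) hR, hval,
      Real.sqrt_div (by positivity), Real.sqrt_sq (by positivity)]
  calc ∫ x in {x : ℝ | |x| < R}ᶜ, ‖u x‖
      = ∫ x in {x : ℝ | |x| < R}ᶜ, ‖Real.exp (-a * |x|)‖ * ‖Real.exp (a * |x|) • u x‖ := by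
        simp only [← norm_smul, exp_neg_mul_abs_smul_exp_mul_abs_smul]
    _ ≤ Real.exp (-a * R) / √a * √(∫ x, ‖Real.exp (a * |x|) • u x‖ ^ 2) := by
        rw [← htail]
        exact setIntegral_norm_mul_norm_le_sqrt_mul_sqrt
          ((memLp_two_exp_neg_mul_abs ha).restrict _) hu

end ExponentialWeight

section PhysicalFourier

lemma one_div_sqrt_two_pi_sq_mul : (1 / √(2 * Real.pi)) ^ 2 * (2 * Real.pi) = 1 := by
  rw [div_pow, Real.sq_sqrt (by positivity)]
  field_simp

lemma norm_exp_I_mul_mul (ζ x : ℝ) : ‖Complex.exp (Complex.I * ζ * x)‖ = 1 := by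
  rw [mul_assoc, ← Complex.ofReal_mul, Complex.norm_exp_I_mul_ofReal]

lemma integrable_mul_exp_I_mul_mul {μ : Measure ℝ} {u : ℝ → ℂ} (hu : Integrable u μ) (x : ℝ) :
    Integrable (fun ζ : ℝ => u ζ * Complex.exp (Complex.I * ζ * x)) μ :=
  hu.mul_bdd (c := 1) (Continuous.aestronglyMeasurable (by fun_prop))
    (.of_forall fun ζ => (norm_exp_I_mul_mul ζ x).le)

lemma norm_integral_mul_exp_I_mul_mul_le (μ : Measure ℝ) (u : ℝ → ℂ) (x : ℝ) :
    ‖∫ ζ : ℝ, u ζ * Complex.exp (Complex.I * ζ * x) ∂μ‖ ≤ ∫ ζ, ‖u ζ‖ ∂μ := by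
  simpa only [norm_mul, norm_exp_I_mul_mul, mul_one] using
    norm_integral_le_integral_norm (μ := μ) fun ζ : ℝ => u ζ * Complex.exp (Complex.I * ζ * x)

variable {g h : ℝ → ℝ}

lemma ft_eq_fourier (g : ℝ → ℝ) (ζ : ℝ) :
    ft g ζ = ((1 / √(2 * Real.pi) : ℝ) : ℂ) * 𝓕 (fun x => (g x : ℂ)) (ζ / (2 * Real.pi)) := by
  rw [ft, Real.fourier_real_eq_integral_exp_smul]
  congr! 3 with x
  rw [smul_eq_mul, mul_comm]
  congr 2
  push_cast
  field_simp

lemma continuous_ft (hg : Integrable g) : Continuous (ft g) := by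
  have hcont : Continuous (𝓕 fun x => (g x : ℂ)) := continuous_fourier_of_integrable hg.ofReal
  rw [funext (ft_eq_fourier g)]
  fun_prop

lemma ft_sub (hg : Integrable g) (hh : Integrable h) : ft (g - h) = ft g - ft h := by
  have hint {f : ℝ → ℝ} (hf : Integrable f) (ζ : ℝ) :
      Integrable fun x : ℝ => (f x : ℂ) * Complex.exp (-(Complex.I * x * ζ)) := by
    simpa using integrable_mul_exp_I_mul_mul hf.ofReal (-ζ)
  ext ζ
  simp only [ft, Pi.sub_apply, Complex.ofReal_sub, sub_mul]
  rw [integral_sub (hint hg ζ) (hint hh ζ), mul_sub]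

lemma memLp_two_ft (hg1 : Integrable g) (hg2 : MemLp g 2) : MemLp (ft g) 2 := by
  have hF : MemLp (𝓕 fun x => (g x : ℂ)) 2 := memLp_two_fourier hg1.ofReal hg2.ofReal
  rw [memLp_two_iff_integrable_sq_norm (continuous_ft hg1).aestronglyMeasurable]
  simp only [ft_eq_fourier, norm_mul, mul_pow]
  exact ((hF.integrable_norm_pow two_ne_zero).comp_div (by positivity)).const_mul _

lemma integral_norm_sq_ft (hg1 : Integrable g) (hg2 : MemLp g 2) :
    ∫ ζ, ‖ft g ζ‖ ^ 2 = ∫ x, g x ^ 2 := by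
  have hF : ∫ ξ, ‖𝓕 (fun x => (g x : ℂ)) ξ‖ ^ 2 = ∫ x, ‖(g x : ℂ)‖ ^ 2 :=
    integral_norm_sq_fourier hg1.ofReal hg2.ofReal
  simp only [ft_eq_fourier, norm_mul, mul_pow, Complex.norm_real, Real.norm_eq_abs, sq_abs]
  rw [integral_const_mul,
    Measure.integral_comp_div (fun ξ => ‖𝓕 (fun x => (g x : ℂ)) ξ‖ ^ 2), hF,
    abs_of_pos Real.two_pi_pos, smul_eq_mul, ← mul_assoc, one_div_sqrt_two_pi_sq_mul]
  simp

lemma integral_ft_mul_exp_eq_fourierInv_fourier (g : ℝ → ℝ) (x : ℝ) :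
    ((1 / √(2 * Real.pi) : ℝ) : ℂ) * ∫ ζ, ft g ζ * Complex.exp (Complex.I * ζ * x)
      = 𝓕⁻ (𝓕 fun y => (g y : ℂ)) x := by
  set c : ℝ := 1 / √(2 * Real.pi) with hc
  have hscale (ζ : ℝ) : ft g ζ * Complex.exp (Complex.I * ζ * x)
      = c * (Complex.exp (↑(2 * Real.pi * inner ℝ (ζ / (2 * Real.pi)) x) * Complex.I) •
          𝓕 (fun y => (g y : ℂ)) (ζ / (2 * Real.pi))) := by
    have hphase : 2 * Real.pi * inner ℝ (ζ / (2 * Real.pi)) x = ζ * x := by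
      rw [Real.inner_apply]
      field_simp
    rw [ft_eq_fourier, ← hc, hphase, smul_eq_mul, mul_assoc, mul_comm (Complex.exp _)]
    push_cast
    ring_nf
  have hconst : (c : ℂ) * c * ((2 * Real.pi : ℝ) : ℂ) = 1 := by
    rw [← sq]
    exact_mod_cast one_div_sqrt_two_pi_sq_mul
  simp_rw [hscale]
  rw [integral_const_mul, Measure.integral_comp_div (fun ξ : ℝ =>
      Complex.exp (↑(2 * Real.pi * inner ℝ ξ x) * Complex.I) • 𝓕 (fun y => (g y : ℂ)) ξ),
    abs_of_pos Real.two_pi_pos, Complex.real_smul, Real.fourierInv_eq', ← mul_assoc,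
    ← mul_assoc, hconst, one_mul]

lemma integral_ft_mul_exp_ae_eq (hg : Integrable g) (hft : Integrable (ft g)) :
    ∀ᵐ x : ℝ, ((1 / √(2 * Real.pi) : ℝ) : ℂ) * ∫ ζ, ft g ζ * Complex.exp (Complex.I * ζ * x)
      = g x := by
  have hG : Integrable (𝓕 fun x => (g x : ℂ)) := by
    have hc : ((1 / √(2 * Real.pi) : ℝ) : ℂ) ≠ 0 :=
      Complex.ofReal_ne_zero.2 (by positivity)
    have h : Integrable fun ζ => 𝓕 (fun x => (g x : ℂ)) (ζ / (2 * Real.pi)) := by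
      rw [funext (ft_eq_fourier g)] at hft
      exact (integrable_const_mul_iff hc.isUnit _).1 hft
    exact (integrable_comp_div_iff _ Real.two_pi_pos.ne').1 h
  filter_upwards [fourierInv_fourier_ae_eq hg.ofReal hG] with x hx
  exact (integral_ft_mul_exp_eq_fourierInv_fourier g x).trans hx

end PhysicalFourier

section LowFrequency

/-- The reconstruction `x ↦ (1/√(2π)) ∫_{|ζ| < R} ĝ(ζ) e^{iζx} dζ` of `g` from its frequencies
below an arbitrary cutoff `R`, of which `truncRecon` is the case `R = ε^{-1/2}`. -/
noncomputable def lowFreqRecon (g : ℝ → ℝ) (R x : ℝ) : ℂ :=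
  ((1 / √(2 * Real.pi) : ℝ) : ℂ) *
    ∫ ζ in {ζ : ℝ | |ζ| < R}, ft g ζ * Complex.exp (Complex.I * ζ * x)

lemma truncRecon_eq_lowFreqRecon (g : ℝ → ℝ) (ε x : ℝ) :
    truncRecon g ε x = lowFreqRecon g (√ε)⁻¹ x :=
  rfl

lemma volume_abs_lt (R : ℝ) : volume {ζ : ℝ | |ζ| < R} = ENNReal.ofReal (2 * R) := by
  simpa [Metric.ball, Real.dist_eq] using Real.volume_ball 0 R

variable {φ ψ : ℝ → ℝ} {a R : ℝ}

lemma lowFreqRecon_sub_ae_eq (hφ : Integrable φ) (hψ : Integrable ψ) (hft : Integrable (ft φ))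
    (R : ℝ) :
    ∀ᵐ x : ℝ, lowFreqRecon ψ R x - φ x = ((1 / √(2 * Real.pi) : ℝ) : ℂ) *
      ((∫ ζ in {ζ : ℝ | |ζ| < R}, ft (ψ - φ) ζ * Complex.exp (Complex.I * ζ * x)) -
        ∫ ζ in {ζ : ℝ | |ζ| < R}ᶜ, ft φ ζ * Complex.exp (Complex.I * ζ * x)) := by
  have hmeas : MeasurableSet {ζ : ℝ | |ζ| < R} := measurableSet_lt (by fun_prop) (by fun_prop)
  have hψft : IntegrableOn (ft ψ) {ζ : ℝ | |ζ| < R} :=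
    (continuous_ft hψ).integrableOn_Ioc.mono_set fun ζ hζ =>
      Set.Ioo_subset_Ioc_self (abs_lt.1 hζ)
  filter_upwards [integral_ft_mul_exp_ae_eq hφ hft] with x hx
  rw [← hx, lowFreqRecon, ← integral_add_compl hmeas (integrable_mul_exp_I_mul_mul hft x),
    ft_sub hψ hφ]
  simp only [Pi.sub_apply, sub_mul]
  rw [integral_sub (integrable_mul_exp_I_mul_mul hψft x)
    (integrable_mul_exp_I_mul_mul hft.restrict x)]
  ring

lemma setIntegral_norm_ft_le (hφ1 : Integrable φ) (hφ2 : MemLp φ 2) (hR : 0 ≤ R) :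
    ∫ ζ in {ζ : ℝ | |ζ| < R}, ‖ft φ ζ‖ ≤ √(2 * R) * √(∫ x, φ x ^ 2) := by
  have h := setIntegral_norm_le_sqrt_measureReal_mul_sqrt (memLp_two_ft hφ1 hφ2)
    (s := {ζ : ℝ | |ζ| < R}) (by rw [volume_abs_lt]; exact ENNReal.ofReal_ne_top)
  rwa [integral_norm_sq_ft hφ1 hφ2, measureReal_def, volume_abs_lt,
    ENNReal.toReal_ofReal (by positivity)] at h

lemma ae_norm_lowFreqRecon_sub_le (ha : 0 < a) (hR : 0 ≤ R) (hφ : Integrable φ)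
    (hψ : Integrable ψ) (hdiff : MemLp (ψ - φ) 2)
    (hhat : MemLp (fun ζ => Real.exp (a * |ζ|) • ft φ ζ) 2) :
    ∀ᵐ x : ℝ, ‖lowFreqRecon ψ R x - φ x‖ ≤ (1 / √(2 * Real.pi)) *
      (√(2 * R) * √(∫ x, (ψ x - φ x) ^ 2) +
        Real.exp (-a * R) / √a * √(∫ ζ, ‖Real.exp (a * |ζ|) • ft φ ζ‖ ^ 2)) := by
  have hft : Integrable (ft φ) := integrable_of_memLp_two_exp_mul_abs_smul ha hhat
  filter_upwards [lowFreqRecon_sub_ae_eq hφ hψ hft R] with x hx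
  rw [hx, norm_mul, Complex.norm_real, Real.norm_of_nonneg (by positivity)]
  gcongr
  refine (norm_sub_le _ _).trans (add_le_add ?_ ?_)
  · exact (norm_integral_mul_exp_I_mul_mul_le _ _ _).trans
      (setIntegral_norm_ft_le (hψ.sub hφ) hdiff hR)
  · exact (norm_integral_mul_exp_I_mul_mul_le _ _ _).trans
      (setIntegral_norm_compl_le_exp_neg_mul_sqrt ha hR hhat)

end LowFrequency

section CutoffScale

variable {ε : ℝ}

lemma sqrt_two_mul_inv_sqrt (hε : 0 ≤ ε) : √(2 * (√ε)⁻¹) = √2 * (ε ^ ((1 : ℝ) / 4))⁻¹ := by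
  rw [Real.sqrt_mul zero_le_two, Real.sqrt_inv, Real.sqrt_eq_rpow √ε, Real.sqrt_eq_rpow ε,
    ← Real.rpow_mul hε]
  norm_num

lemma three_mul_cube_le_two_mul_exp {R : ℝ} (hR : 0 ≤ R) : 3 * R ^ 3 ≤ 2 * Real.exp (2 * R) := by
  have h := Real.sum_le_exp_of_nonneg (x := 2 * R) (by positivity) 5
  simp only [Finset.sum_range_succ, Finset.sum_range_zero, Nat.factorial] at h
  norm_num at h
  nlinarith [sq_nonneg (R ^ 2 - R), sq_nonneg R]

lemma exp_neg_inv_sqrt_le (hε : 0 < ε) :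
    Real.exp (-(√ε)⁻¹) ≤ √(2 / 3) * ε ^ ((3 : ℝ) / 4) := by
  have hcube : (√ε) ^ 3 = (ε ^ ((3 : ℝ) / 4)) ^ 2 := by
    rw [Real.sqrt_eq_rpow, ← Real.rpow_mul_natCast hε.le, ← Real.rpow_mul_natCast hε.le]
    norm_num
  have h := three_mul_cube_le_two_mul_exp (inv_nonneg.2 (Real.sqrt_nonneg ε))
  have hsq : Real.exp (-(√ε)⁻¹) ^ 2 ≤ 2 / 3 * (ε ^ ((3 : ℝ) / 4)) ^ 2 := by
    rw [← Real.exp_nat_mul, Nat.cast_ofNat, mul_neg, Real.exp_neg, ← hcube]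
    field_simp at h ⊢
    exact h
  rw [← Real.sqrt_sq (by positivity : 0 ≤ ε ^ ((3 : ℝ) / 4)), ← Real.sqrt_mul (by norm_num)]
  exact Real.le_sqrt_of_sq_le hsq

lemma inv_rpow_one_fourth_mul_lt {N : ℝ} (hε : 0 < ε) (hN : N < ε) :
    (ε ^ ((1 : ℝ) / 4))⁻¹ * N < ε ^ ((3 : ℝ) / 4) := by
  rw [inv_mul_lt_iff₀ (by positivity), ← Real.rpow_add hε]
  norm_num [hN]

end CutoffScale

theorem trunc_recon_sup_estimate_general (ε : ℝ) (hε0 : 0 < ε)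
    (φ φε : ℝ → ℝ)
    (hφ1 : Integrable φ) (hφε1 : Integrable φε)
    (hdiff : MemLp (φε - φ) 2 (volume : Measure ℝ))
    (hnear : Real.sqrt (∫ x : ℝ, (φε x - φ x) ^ 2) < ε)
    (hhat : MemLp (fun ζ : ℝ => ((Real.exp |ζ| : ℝ) : ℂ) * ft φ ζ) 2
      (volume : Measure ℝ)) :
    (∀ᵐ x : ℝ, ‖truncRecon φε ε x - (φ x : ℂ)‖ ≤
        (1 / Real.sqrt (2 * Real.pi)) *
          (Real.sqrt 2 * (ε ^ ((1 : ℝ) / 4))⁻¹ * Real.sqrt (∫ x : ℝ, (φ x - φε x) ^ 2) +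
            Real.sqrt (2 / 3) *
              Real.sqrt (∫ ζ : ℝ, ‖((Real.exp |ζ| : ℝ) : ℂ) * ft φ ζ‖ ^ 2) *
              ε ^ ((3 : ℝ) / 4))) ∧
      (1 / Real.sqrt (2 * Real.pi)) *
          (Real.sqrt 2 * (ε ^ ((1 : ℝ) / 4))⁻¹ * Real.sqrt (∫ x : ℝ, (φ x - φε x) ^ 2) +
            Real.sqrt (2 / 3) *
              Real.sqrt (∫ ζ : ℝ, ‖((Real.exp |ζ| : ℝ) : ℂ) * ft φ ζ‖ ^ 2) *
              ε ^ ((3 : ℝ) / 4)) <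
        (1 / Real.sqrt (2 * Real.pi)) *
            (Real.sqrt 2 +
              Real.sqrt (2 / 3) *
                Real.sqrt (∫ ζ : ℝ, ‖((Real.exp |ζ| : ℝ) : ℂ) * ft φ ζ‖ ^ 2)) *
          ε ^ ((3 : ℝ) / 4) := by
  have hswap : ∫ x, (φ x - φε x) ^ 2 = ∫ x, (φε x - φ x) ^ 2 := by
    simp only [sub_sq_comm]
  rw [hswap]
  constructor
  · have hhat' : MemLp (fun ζ => Real.exp (1 * |ζ|) • ft φ ζ) 2 := by
      simpa only [one_mul, Complex.real_smul] using hhat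
    filter_upwards [ae_norm_lowFreqRecon_sub_le one_pos (inv_nonneg.2 (Real.sqrt_nonneg ε)) hφ1
      hφε1 hdiff hhat'] with x hx
    simp only [one_mul, neg_mul, Real.sqrt_one, div_one, Complex.real_smul,
      sqrt_two_mul_inv_sqrt hε0.le] at hx
    rw [truncRecon_eq_lowFreqRecon]
    refine hx.trans ?_
    rw [mul_right_comm √(2 / 3)]
    gcongr
    exact exp_neg_inv_sqrt_le hε0
  · rw [mul_assoc √2, mul_assoc (1 / √(2 * Real.pi)), add_mul]
    gcongr
    exact inv_rpow_one_fourth_mul_lt hε0 hnear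

/-- if `‖φ_ε - φ‖_{L²} < ε` and `e^{|ζ|} φ̂ ∈ L²(ℝ)`, then for a.e. `x`,
`|φ̃_ε(x) - φ(x)| ≤ (1/√(2π)) [√2 ε^{-1/4} ‖φ - φ_ε‖_{L²} + √(2/3) ‖e^{|ζ|} φ̂‖_{L²} ε^{3/4}]`,
and this bound is `< C₂ ε^{3/4}` with
`C₂ = (1/√(2π)) [√2 + √(2/3) ‖e^{|ζ|} φ̂‖_{L²}]`. -/
theorem trunc_recon_sup_estimate (ε : ℝ) (hε0 : 0 < ε) (hε1 : ε < 1)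
    (φ φε : ℝ → ℝ)
    (hφ1 : Integrable φ) (hφ2 : MemLp φ 2 (volume : Measure ℝ))
    (hφε1 : Integrable φε) (hφε2 : MemLp φε 2 (volume : Measure ℝ))
    (hnear : Real.sqrt (∫ x : ℝ, (φε x - φ x) ^ 2) < ε)
    (hhat : MemLp (fun ζ : ℝ => ((Real.exp |ζ| : ℝ) : ℂ) * ft φ ζ) 2
      (volume : Measure ℝ)) :
    (∀ᵐ x : ℝ, ‖truncRecon φε ε x - (φ x : ℂ)‖ ≤
        (1 / Real.sqrt (2 * Real.pi)) *
          (Real.sqrt 2 * (ε ^ ((1 : ℝ) / 4))⁻¹ * Real.sqrt (∫ x : ℝ, (φ x - φε x) ^ 2) +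
            Real.sqrt (2 / 3) *
              Real.sqrt (∫ ζ : ℝ, ‖((Real.exp |ζ| : ℝ) : ℂ) * ft φ ζ‖ ^ 2) *
              ε ^ ((3 : ℝ) / 4))) ∧
      (1 / Real.sqrt (2 * Real.pi)) *
          (Real.sqrt 2 * (ε ^ ((1 : ℝ) / 4))⁻¹ * Real.sqrt (∫ x : ℝ, (φ x - φε x) ^ 2) +
            Real.sqrt (2 / 3) *
              Real.sqrt (∫ ζ : ℝ, ‖((Real.exp |ζ| : ℝ) : ℂ) * ft φ ζ‖ ^ 2) *
              ε ^ ((3 : ℝ) / 4)) <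
        (1 / Real.sqrt (2 * Real.pi)) *
            (Real.sqrt 2 +
              Real.sqrt (2 / 3) *
                Real.sqrt (∫ ζ : ℝ, ‖((Real.exp |ζ| : ℝ) : ℂ) * ft φ ζ‖ ^ 2)) *
          ε ^ ((3 : ℝ) / 4) :=
  trunc_recon_sup_estimate_general ε hε0 φ φε hφ1 hφε1 (hφε2.sub hφ2) hnear hhat
end

section
/- Let 0 < ε < e^{-3}. Let φ̂, ψ̂ : ℝ → ℂ satisfy e^{|ζ|} φ̂(ζ), e^{|ζ|} ψ̂(ζ), ζ e^{|ζ|} φ̂(ζ), ζ e^{|ζ|} ψ̂(ζ) ∈ L²(ℝ). Let C₃, C > 0 and let χ_φ, χ_ψ ∈ L²(ℝ) with ‖χ_φ − φ̂‖_{L²(ℝ)} < C₃ ε and ‖χ_ψ − ψ̂‖_{L²(ℝ)} < C ε^{1/2}. Define χ_φ^log(ζ) = χ_φ(ζ)·1_{|ζ| < (1/6)ln(1/ε)} and χ_ψ^log(ζ) = χ_ψ(ζ)·1_{|ζ| < (1/6)ln(1/ε)}, and for ζ ≠ 0, 0 ≤ y ≤ 1 set ℵ[a,b](ζ, y) = (1/2)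 a(ζ) [e^{(1−y)|ζ|} + e^{(y−1)|ζ|}] − (1/(2|ζ|)) b(ζ) [e^{(1−y)|ζ|} − e^{(y−1)|ζ|}]. Then ‖ℵ[χ_φ^log, χ_ψ^log] − ℵ[φ̂, ψ̂]‖_{L²(ℝ × (0,1))} < (C₄ + C₅) (ln(1/ε))^{-1}, where C₄ = √(C₃² + 36 ‖ζ φ̂(ζ) e^{|ζ|}‖²_{L²(ℝ)}) and C₅ = √(C² + 36 ‖ζ ψ̂(ζ) e^{|ζ|}‖²_{L²(ℝ)}). -/
open MeasureTheory

/-- The Fourier-side solution formula of the Cauchy problem for the Laplace equation on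
`ℝ × (0,1)`: `ℵ[a,b](ζ,y) = (1/2) a(ζ) [e^{(1-y)|ζ|} + e^{(y-1)|ζ|}]
 - (1/(2|ζ|)) b(ζ) [e^{(1-y)|ζ|} - e^{(y-1)|ζ|}]`. -/
noncomputable def aleph (a b : ℝ → ℂ) (ζ y : ℝ) : ℂ :=
  (1 / 2 : ℂ) * a ζ * ((Real.exp ((1 - y) * |ζ|) + Real.exp ((y - 1) * |ζ|) : ℝ) : ℂ) -
    ((1 / (2 * |ζ|) : ℝ) : ℂ) * b ζ *
      ((Real.exp ((1 - y) * |ζ|) - Real.exp ((y - 1) * |ζ|) : ℝ) : ℂ)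

/-!
The kernels of `ℵ` are at most `cosh ζ`, so the error of the regularized solution is at most the
sum of the `L²` norms of the two data errors weighted by `cosh ζ`. Truncation at frequency `R`
splits each weighted error: below `R` the noise is amplified by at most `cosh R`, while above `R`
the discarded part of `a` satisfies `cosh ζ |a ζ| ≤ R⁻¹ |ζ| e^{|ζ|} |a ζ|`. For
`R = (1/6) ln(1/ε)` one has `√ε cosh R < (ln(1/ε))⁻¹` and `R⁻¹ = 6 (ln(1/ε))⁻¹`.
-/

lemma abs_sinh_le_cosh_mul_abs (x : ℝ) : |Real.sinh x| ≤ Real.cosh x * |x| := by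
  have bound : ∀ t ∈ Set.Icc (-|x|) |x|, ‖deriv Real.sinh t‖ ≤ Real.cosh x := fun t ht => by
    rw [Real.deriv_sinh, Real.norm_of_nonneg (Real.cosh_pos t).le, Real.cosh_le_cosh]
    exact abs_le.2 ht
  simpa using (convex_Icc (-|x|) |x|).norm_image_sub_le_of_norm_deriv_le
    (fun t _ => Real.differentiable_sinh t) bound
    (show (0 : ℝ) ∈ Set.Icc (-|x|) |x| by simp) (abs_le.1 le_rfl)

lemma cosh_le_exp_abs (x : ℝ) : Real.cosh x ≤ Real.exp |x| := by
  rw [← Real.cosh_abs, ← Real.cosh_add_sinh]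
  exact le_add_of_nonneg_right (Real.sinh_nonneg_iff.2 (abs_nonneg x))

-- `cosh (x / 6)` cannot be relaxed to `exp (x / 6)`: `x * exp (-x / 3) < 1` fails at `x = 3`, so
-- the inequality `ε^{2/3} < (ln(1/ε))⁻²` used in the paper is false for `ε` just below `e^{-3}`.
lemma mul_exp_neg_half_mul_cosh_lt_one (x : ℝ) :
    x * Real.exp (-x / 2) * Real.cosh (x / 6) < 1 := by
  have slow : x / 3 * Real.exp (-(x / 3)) ≤ Real.exp (-1) := Real.mul_exp_neg_le_exp_neg_one _
  have fast : 2 * x / 3 * Real.exp (-(2 * x / 3)) ≤ Real.exp (-1) :=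
    Real.mul_exp_neg_le_exp_neg_one _
  have exp_neg_one_lt : Real.exp (-1) < 4 / 9 :=
    Real.exp_neg_one_lt_d9.trans (by norm_num)
  calc x * Real.exp (-x / 2) * Real.cosh (x / 6)
      = x / 2 * (Real.exp (-x / 2 + x / 6) + Real.exp (-x / 2 + -(x / 6))) := by
        rw [Real.cosh_eq, Real.exp_add, Real.exp_add]; ring
    _ = 3 / 2 * (x / 3 * Real.exp (-(x / 3))) + 3 / 4 * (2 * x / 3 * Real.exp (-(2 * x / 3))) := by
        ring_nf
    _ < 1 := by linarith

lemma sqrt_mul_cosh_log_lt_inv_log {ε : ℝ} (hε0 : 0 < ε) (hε1 : ε < 1) :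
    Real.sqrt ε * Real.cosh (1 / 6 * Real.log (1 / ε)) < (Real.log (1 / ε))⁻¹ := by
  have log_pos : 0 < Real.log (1 / ε) := Real.log_pos (one_lt_one_div hε0 hε1)
  have sqrt_eq : Real.sqrt ε = Real.exp (-Real.log (1 / ε) / 2) := by
    rw [one_div, Real.log_inv, neg_neg, Real.exp_half, Real.exp_log hε0]
  rw [sqrt_eq, one_div_mul_eq_div, ← one_div (Real.log (1 / ε)), lt_div_iff₀ log_pos]
  linarith [mul_exp_neg_half_mul_cosh_lt_one (Real.log (1 / ε))]

lemma lpNorm_two_eq_sqrt_integral {α E : Type*} [MeasurableSpace α] [NormedAddCommGroup E]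
    {μ : Measure α} {f : α → E} (hf : AEStronglyMeasurable f μ) :
    lpNorm f 2 μ = Real.sqrt (∫ x, ‖f x‖ ^ 2 ∂μ) := by
  simp [lpNorm_eq_integral_norm_rpow_toReal two_ne_zero ENNReal.ofNat_ne_top hf,
    Real.sqrt_eq_rpow]

lemma sqrt_integral_add_sq_le {α : Type*} [MeasurableSpace α] {μ : Measure α} {f g : α → ℝ}
    (hf : MemLp f 2 μ) (hg : MemLp g 2 μ) :
    Real.sqrt (∫ x, (f x + g x) ^ 2 ∂μ) ≤
      Real.sqrt (∫ x, f x ^ 2 ∂μ) + Real.sqrt (∫ x, g x ^ 2 ∂μ) := by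
  simpa [lpNorm_two_eq_sqrt_integral, hf.1, hg.1, hf.1.add hg.1] using
    lpNorm_add_le (g := g) hf one_le_two

lemma memLp_of_memLp_smul_of_one_le_norm {α 𝕜 E : Type*} [MeasurableSpace α] {μ : Measure α}
    [NormedField 𝕜] [NormedAddCommGroup E] [NormedSpace 𝕜 E] {c : α → 𝕜} {f : α → E} {p : ENNReal}
    (hc : AEStronglyMeasurable c μ) (one_le : ∀ᵐ x ∂μ, 1 ≤ ‖c x‖)
    (h : MemLp (fun x => c x • f x) p μ) : MemLp f p μ := by
  have ne_zero : ∀ᵐ x ∂μ, c x ≠ 0 :=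
    one_le.mono fun x hx => norm_pos_iff.1 (one_pos.trans_le hx)
  refine h.of_le ((aestronglyMeasurable_smul_iff₀ hc ne_zero).1 h.1) (one_le.mono fun x hx => ?_)
  rw [norm_smul]
  exact le_mul_of_one_le_left (norm_nonneg _) hx

lemma aleph_eq_cosh_sub_sinh (a b : ℝ → ℂ) (ζ y : ℝ) :
    aleph a b ζ y = ((Real.cosh ((1 - y) * |ζ|) : ℝ) : ℂ) * a ζ -
      ((Real.sinh ((1 - y) * |ζ|) / |ζ| : ℝ) : ℂ) * b ζ := by
  rw [aleph, ← neg_sub 1 y, neg_mul, Real.cosh_eq, Real.sinh_eq]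
  push_cast
  field_simp

lemma aleph_sub_aleph (a b a' b' : ℝ → ℂ) (ζ y : ℝ) :
    aleph a b ζ y - aleph a' b' ζ y = aleph (a - a') (b - b') ζ y := by
  simp only [aleph, Pi.sub_apply]
  ring

lemma norm_aleph_le (a b : ℝ → ℂ) (ζ : ℝ) {y : ℝ} (hy : |1 - y| ≤ 1) :
    ‖aleph a b ζ y‖ ≤ Real.cosh ζ * ‖a ζ‖ + Real.cosh ζ * ‖b ζ‖ := by
  have cosh_le : Real.cosh ((1 - y) * |ζ|) ≤ Real.cosh ζ := by
    rw [Real.cosh_le_cosh, abs_mul, abs_abs]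
    exact mul_le_of_le_one_left (abs_nonneg ζ) hy
  have sinh_div_le : ‖Real.sinh ((1 - y) * |ζ|) / |ζ|‖ ≤ Real.cosh ζ := by
    rw [Real.norm_eq_abs, abs_div, abs_abs]
    refine div_le_of_le_mul₀ (abs_nonneg ζ) (Real.cosh_pos ζ).le ?_
    calc |Real.sinh ((1 - y) * |ζ|)|
        ≤ Real.cosh ((1 - y) * |ζ|) * |((1 - y) * |ζ|)| := abs_sinh_le_cosh_mul_abs _
      _ = Real.cosh ((1 - y) * |ζ|) * (|1 - y| * |ζ|) := by rw [abs_mul, abs_abs]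
      _ ≤ Real.cosh ζ * (1 * |ζ|) := by gcongr
      _ = Real.cosh ζ * |ζ| := by rw [one_mul]
  rw [aleph_eq_cosh_sub_sinh]
  refine (norm_sub_le _ _).trans ?_
  rw [norm_mul, norm_mul, Complex.norm_real, Complex.norm_real,
    Real.norm_of_nonneg (Real.cosh_pos _).le]
  gcongr

lemma setIntegral_norm_aleph_sq_le (a b : ℝ → ℂ) (ζ : ℝ) :
    ∫ y in Set.Ioo (0 : ℝ) 1, ‖aleph a b ζ y‖ ^ 2 ≤
      (Real.cosh ζ * ‖a ζ‖ + Real.cosh ζ * ‖b ζ‖) ^ 2 := by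
  have bound : ∀ y ∈ Set.Ioo (0 : ℝ) 1,
      ‖‖aleph a b ζ y‖ ^ 2‖ ≤ (Real.cosh ζ * ‖a ζ‖ + Real.cosh ζ * ‖b ζ‖) ^ 2 := fun y hy => by
    rw [norm_pow, norm_norm]
    exact pow_le_pow_left₀ (norm_nonneg _)
      (norm_aleph_le a b ζ (abs_le.2 ⟨by linarith [hy.2], by linarith [hy.1]⟩)) 2
  have volume_lt_top : volume (Set.Ioo (0 : ℝ) 1) < ⊤ := measure_Ioo_lt_top
  simpa using (le_abs_self _).trans (norm_setIntegral_le_of_norm_le_const volume_lt_top bound)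

lemma sqrt_integral_norm_aleph_sq_le {μ : Measure ℝ} {a b : ℝ → ℂ}
    (ha : MemLp (fun ζ => Real.cosh ζ * ‖a ζ‖) 2 μ)
    (hb : MemLp (fun ζ => Real.cosh ζ * ‖b ζ‖) 2 μ) :
    Real.sqrt (∫ ζ, (∫ y in Set.Ioo (0 : ℝ) 1, ‖aleph a b ζ y‖ ^ 2) ∂μ) ≤
      Real.sqrt (∫ ζ, (Real.cosh ζ * ‖a ζ‖) ^ 2 ∂μ) +
        Real.sqrt (∫ ζ, (Real.cosh ζ * ‖b ζ‖) ^ 2 ∂μ) :=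
  (Real.sqrt_le_sqrt (integral_mono_of_nonneg
    (.of_forall fun _ => integral_nonneg fun _ => sq_nonneg _) (ha.add hb).integrable_sq
    (.of_forall fun ζ => setIntegral_norm_aleph_sq_le a b ζ))).trans
  (sqrt_integral_add_sq_le ha hb)

/-- The truncation of a function of frequency to `|ζ| < R`, written `χ^log` in the paper for
`R = (1/6) ln(1/ε)`. It is an `if` rather than a `Set.indicator` to match the truncated data of the
final estimate definitionally. -/
noncomputable def lowPass {E : Type*} [Zero E] (R : ℝ) (χ : ℝ → E) (ζ : ℝ) : E :=
  if |ζ| < R then χ ζ else 0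

section LowPass

variable {E : Type*} [NormedAddCommGroup E] {μ : Measure ℝ} {R : ℝ} {χ a : ℝ → E}

lemma aestronglyMeasurable_lowPass_sub (hχ : AEStronglyMeasurable (χ - a) μ)
    (ha : AEStronglyMeasurable a μ) : AEStronglyMeasurable (lowPass R χ - a) μ := by
  have hS : MeasurableSet {ζ : ℝ | |ζ| < R} := measurableSet_lt (by fun_prop) (by fun_prop)
  have lowPass_eq : lowPass R χ = {ζ | |ζ| < R}.indicator ((χ - a) + a) := by
    ext ζ; simp [lowPass, Set.indicator_apply]
  rw [lowPass_eq]
  exact ((hχ.add ha).indicator hS).sub ha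

variable [NormedSpace ℝ E]

lemma sq_cosh_mul_norm_lowPass_sub_le (hR : 0 < R) (χ a : ℝ → E) (ζ : ℝ) :
    (Real.cosh ζ * ‖(lowPass R χ - a) ζ‖) ^ 2 ≤
      Real.cosh R ^ 2 * ‖(χ - a) ζ‖ ^ 2 + R⁻¹ ^ 2 * ‖(ζ * Real.exp |ζ|) • a ζ‖ ^ 2 := by
  rw [← mul_pow, ← mul_pow]
  rcases lt_or_ge |ζ| R with below | above
  · have cosh_le : Real.cosh ζ ≤ Real.cosh R := Real.cosh_le_cosh.2 (below.le.trans (le_abs_self R))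
    rw [Pi.sub_apply, lowPass, if_pos below, ← Pi.sub_apply]
    exact le_add_of_le_of_nonneg (by gcongr) (sq_nonneg _)
  · have tail : Real.cosh ζ * ‖a ζ‖ ≤ R⁻¹ * ‖(ζ * Real.exp |ζ|) • a ζ‖ := by
      calc Real.cosh ζ * ‖a ζ‖ ≤ 1 * (Real.exp |ζ| * ‖a ζ‖) := by
            rw [one_mul]; gcongr; exact cosh_le_exp_abs ζ
        _ ≤ R⁻¹ * |ζ| * (Real.exp |ζ| * ‖a ζ‖) := by
            gcongr; exact (one_le_inv_mul₀ hR).2 above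
        _ = R⁻¹ * ‖(ζ * Real.exp |ζ|) • a ζ‖ := by
            rw [norm_smul, norm_mul, Real.norm_eq_abs, Real.norm_eq_abs, Real.abs_exp]; ring
    rw [Pi.sub_apply, lowPass, if_neg above.not_gt, zero_sub, norm_neg]
    exact le_add_of_nonneg_of_le (sq_nonneg _) (by gcongr)

lemma aestronglyMeasurable_of_mul_exp_abs_smul [NullSingletonClass μ]
    (h : AEStronglyMeasurable (fun ζ : ℝ => (ζ * Real.exp |ζ|) • a ζ) μ) :
    AEStronglyMeasurable a μ := by
  refine (aestronglyMeasurable_smul_iff₀ (by fun_prop) ?_).1 h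
  filter_upwards [Measure.ae_ne μ 0] with ζ hζ
  exact mul_ne_zero hζ (Real.exp_ne_zero _)

lemma memLp_cosh_mul_norm_lowPass_sub [NullSingletonClass μ] (hR : 0 < R) (hχ : MemLp (χ - a) 2 μ)
    (ha : MemLp (fun ζ : ℝ => (ζ * Real.exp |ζ|) • a ζ) 2 μ) :
    MemLp (fun ζ => Real.cosh ζ * ‖(lowPass R χ - a) ζ‖) 2 μ := by
  have measurable : AEStronglyMeasurable (fun ζ => Real.cosh ζ * ‖(lowPass R χ - a) ζ‖) μ :=
    Real.continuous_cosh.aestronglyMeasurable.mul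
      (aestronglyMeasurable_lowPass_sub hχ.1 (aestronglyMeasurable_of_mul_exp_abs_smul ha.1)).norm
  have noise := (hχ.integrable_norm_pow two_ne_zero).const_mul (Real.cosh R ^ 2)
  have tail := (ha.integrable_norm_pow two_ne_zero).const_mul (R⁻¹ ^ 2)
  refine (memLp_two_iff_integrable_sq measurable).2
    ((noise.add tail).mono' (measurable.pow 2) (.of_forall fun ζ => ?_))
  rw [Real.norm_of_nonneg (sq_nonneg _)]
  exact sq_cosh_mul_norm_lowPass_sub_le hR χ a ζ

lemma integral_sq_cosh_mul_norm_lowPass_sub_le [NullSingletonClass μ] (hR : 0 < R)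
    (hχ : MemLp (χ - a) 2 μ)
    (ha : MemLp (fun ζ : ℝ => (ζ * Real.exp |ζ|) • a ζ) 2 μ) :
    ∫ ζ, (Real.cosh ζ * ‖(lowPass R χ - a) ζ‖) ^ 2 ∂μ ≤
      Real.cosh R ^ 2 * (∫ ζ, ‖(χ - a) ζ‖ ^ 2 ∂μ) +
        R⁻¹ ^ 2 * ∫ ζ : ℝ, ‖(ζ * Real.exp |ζ|) • a ζ‖ ^ 2 ∂μ := by
  have noise := (hχ.integrable_norm_pow two_ne_zero).const_mul (Real.cosh R ^ 2)
  have tail := (ha.integrable_norm_pow two_ne_zero).const_mul (R⁻¹ ^ 2)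
  rw [← integral_const_mul, ← integral_const_mul, ← integral_add noise tail]
  exact integral_mono (memLp_cosh_mul_norm_lowPass_sub hR hχ ha).integrable_sq (noise.add tail)
    (sq_cosh_mul_norm_lowPass_sub_le hR χ a)

end LowPass

theorem sqrt_integral_norm_aleph_lowPass_sub_sq_le {μ : Measure ℝ} [NullSingletonClass μ]
    {R : ℝ} (hR : 0 < R) {φ ψ χφ χψ : ℝ → ℂ}
    (hχφ : MemLp (χφ - φ) 2 μ) (hχψ : MemLp (χψ - ψ) 2 μ)
    (hφ : MemLp (fun ζ : ℝ => (ζ * Real.exp |ζ|) • φ ζ) 2 μ)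
    (hψ : MemLp (fun ζ : ℝ => (ζ * Real.exp |ζ|) • ψ ζ) 2 μ) :
    Real.sqrt (∫ ζ, (∫ y in Set.Ioo (0 : ℝ) 1,
        ‖aleph (lowPass R χφ) (lowPass R χψ) ζ y - aleph φ ψ ζ y‖ ^ 2) ∂μ) ≤
      Real.sqrt (Real.cosh R ^ 2 * (∫ ζ, ‖(χφ - φ) ζ‖ ^ 2 ∂μ) +
          R⁻¹ ^ 2 * ∫ ζ : ℝ, ‖(ζ * Real.exp |ζ|) • φ ζ‖ ^ 2 ∂μ) +
        Real.sqrt (Real.cosh R ^ 2 * (∫ ζ, ‖(χψ - ψ) ζ‖ ^ 2 ∂μ) +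
          R⁻¹ ^ 2 * ∫ ζ : ℝ, ‖(ζ * Real.exp |ζ|) • ψ ζ‖ ^ 2 ∂μ) := by
  simp only [aleph_sub_aleph]
  exact (sqrt_integral_norm_aleph_sq_le (memLp_cosh_mul_norm_lowPass_sub hR hχφ hφ)
    (memLp_cosh_mul_norm_lowPass_sub hR hχψ hψ)).trans (add_le_add
      (Real.sqrt_le_sqrt (integral_sq_cosh_mul_norm_lowPass_sub_le hR hχφ hφ))
      (Real.sqrt_le_sqrt (integral_sq_cosh_mul_norm_lowPass_sub_le hR hχψ hψ)))

lemma sqrt_cosh_sq_mul_add_lt_mul_inv_log {ε C I J : ℝ} (hε0 : 0 < ε) (hε1 : ε < 1)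
    (hI : Real.sqrt I < C * Real.sqrt ε) (hJ : 0 ≤ J) :
    Real.sqrt (Real.cosh (1 / 6 * Real.log (1 / ε)) ^ 2 * I +
        (1 / 6 * Real.log (1 / ε))⁻¹ ^ 2 * J) <
      Real.sqrt (C ^ 2 + 36 * J) * (Real.log (1 / ε))⁻¹ := by
  have hC : 0 < C :=
    pos_of_mul_pos_left ((Real.sqrt_nonneg I).trans_lt hI) (Real.sqrt_nonneg ε)
  have log_pos : 0 < Real.log (1 / ε) := Real.log_pos (one_lt_one_div hε0 hε1)
  have hI_sq : I < (C * Real.sqrt ε) ^ 2 := (Real.sqrt_lt' (by positivity)).1 hI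
  have amplification : (Real.sqrt ε * Real.cosh (1 / 6 * Real.log (1 / ε))) ^ 2 <
      (Real.log (1 / ε))⁻¹ ^ 2 := by
    gcongr
    exact sqrt_mul_cosh_log_lt_inv_log hε0 hε1
  rw [Real.sqrt_lt' (by positivity), mul_pow, Real.sq_sqrt (by positivity)]
  calc Real.cosh (1 / 6 * Real.log (1 / ε)) ^ 2 * I + (1 / 6 * Real.log (1 / ε))⁻¹ ^ 2 * J
      < Real.cosh (1 / 6 * Real.log (1 / ε)) ^ 2 * (C * Real.sqrt ε) ^ 2 +
          (1 / 6 * Real.log (1 / ε))⁻¹ ^ 2 * J := by gcongr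
    _ = C ^ 2 * (Real.sqrt ε * Real.cosh (1 / 6 * Real.log (1 / ε))) ^ 2 +
          36 * J * (Real.log (1 / ε))⁻¹ ^ 2 := by field_simp; ring
    _ ≤ C ^ 2 * (Real.log (1 / ε))⁻¹ ^ 2 + 36 * J * (Real.log (1 / ε))⁻¹ ^ 2 := by gcongr
    _ = (C ^ 2 + 36 * J) * (Real.log (1 / ε))⁻¹ ^ 2 := by ring

lemma memLp_of_memLp_exp_abs_mul {a : ℝ → ℂ} {p : ENNReal} {μ : Measure ℝ}
    (h : MemLp (fun ζ : ℝ => ((Real.exp |ζ| : ℝ) : ℂ) * a ζ) p μ) : MemLp a p μ := by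
  refine memLp_of_memLp_smul_of_one_le_norm (c := fun ζ : ℝ => ((Real.exp |ζ| : ℝ) : ℂ))
    (by fun_prop) (.of_forall fun ζ => ?_) h
  rw [Complex.norm_real, Real.norm_of_nonneg (Real.exp_nonneg _)]
  exact Real.one_le_exp (abs_nonneg ζ)

theorem regularized_cauchy_laplace_estimate_general {ε : ℝ} (hε0 : 0 < ε)
    (hε1 : ε < 1)
    {φhat ψhat χφ χψ : ℝ → ℂ}
    (hχφ : MemLp (fun ζ => χφ ζ - φhat ζ) 2) (hχψ : MemLp (fun ζ => χψ ζ - ψhat ζ) 2)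
    (hφz : MemLp (fun ζ : ℝ => (ζ : ℂ) * ((Real.exp |ζ| : ℝ) : ℂ) * φhat ζ) 2
      (volume : Measure ℝ))
    (hψz : MemLp (fun ζ : ℝ => (ζ : ℂ) * ((Real.exp |ζ| : ℝ) : ℂ) * ψhat ζ) 2
      (volume : Measure ℝ))
    {C₃ C : ℝ}
    (hχφn : Real.sqrt (∫ ζ : ℝ, ‖χφ ζ - φhat ζ‖ ^ 2) < C₃ * Real.sqrt ε)
    (hχψn : Real.sqrt (∫ ζ : ℝ, ‖χψ ζ - ψhat ζ‖ ^ 2) < C * Real.sqrt ε) :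
    Real.sqrt (∫ ζ : ℝ, ∫ y in Set.Ioo (0 : ℝ) 1,
        ‖aleph (fun z => if |z| < (1 / 6) * Real.log (1 / ε) then χφ z else 0)
            (fun z => if |z| < (1 / 6) * Real.log (1 / ε) then χψ z else 0) ζ y -
          aleph φhat ψhat ζ y‖ ^ 2) <
      (Real.sqrt (C₃ ^ 2 +
            36 * ∫ ζ : ℝ, ‖(ζ : ℂ) * φhat ζ * ((Real.exp |ζ| : ℝ) : ℂ)‖ ^ 2) +
          Real.sqrt (C ^ 2 +
            36 * ∫ ζ : ℝ, ‖(ζ : ℂ) * ψhat ζ * ((Real.exp |ζ| : ℝ) : ℂ)‖ ^ 2)) *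
        (Real.log (1 / ε))⁻¹ := by
  have smul_eq (ζ : ℝ) (z : ℂ) :
      (ζ : ℂ) * ((Real.exp |ζ| : ℝ) : ℂ) * z = (ζ * Real.exp |ζ|) • z := by
    rw [Complex.real_smul, Complex.ofReal_mul]
  have smul_eq' (ζ : ℝ) (z : ℂ) :
      (ζ : ℂ) * z * ((Real.exp |ζ| : ℝ) : ℂ) = (ζ * Real.exp |ζ|) • z := by
    rw [mul_right_comm, smul_eq]
  simp only [smul_eq] at hφz hψz
  simp only [smul_eq', add_mul]
  have cutoff_pos : 0 < 1 / 6 * Real.log (1 / ε) :=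
    mul_pos (by norm_num) (Real.log_pos (one_lt_one_div hε0 hε1))
  exact (sqrt_integral_norm_aleph_lowPass_sub_sq_le cutoff_pos hχφ hχψ hφz hψz).trans_lt <|
    add_lt_add
      (sqrt_cosh_sq_mul_add_lt_mul_inv_log hε0 hε1 hχφn (integral_nonneg fun _ => sq_nonneg _))
      (sqrt_cosh_sq_mul_add_lt_mul_inv_log hε0 hε1 hχψn (integral_nonneg fun _ => sq_nonneg _))

/-- Theorem 2 of the paper, on the Fourier side: with data `χ_φ, χ_ψ`
approximating `φ̂, ψ̂` at rates `C₃ ε` resp. `C ε^{1/2}`, truncating at frequency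
`(1/6) ln(1/ε)` yields a regularized solution whose `L²(ℝ × (0,1))` distance to the exact
one is `< (C₄ + C₅)(ln(1/ε))⁻¹` where `C₄ = √(C₃² + 36 ‖ζ φ̂(ζ) e^{|ζ|}‖²)` and
`C₅ = √(C² + 36 ‖ζ ψ̂(ζ) e^{|ζ|}‖²)`. -/
theorem regularized_cauchy_laplace_estimate (ε : ℝ) (hε0 : 0 < ε)
    (hε1 : ε < Real.exp (-3))
    (φhat ψhat χφ χψ : ℝ → ℂ)
    (hφm : Measurable φhat) (hψm : Measurable ψhat)
    (hφe : MemLp (fun ζ : ℝ => ((Real.exp |ζ| : ℝ) : ℂ) * φhat ζ) 2 (volume : Measure ℝ))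
    (hψe : MemLp (fun ζ : ℝ => ((Real.exp |ζ| : ℝ) : ℂ) * ψhat ζ) 2 (volume : Measure ℝ))
    (hφz : MemLp (fun ζ : ℝ => (ζ : ℂ) * ((Real.exp |ζ| : ℝ) : ℂ) * φhat ζ) 2
      (volume : Measure ℝ))
    (hψz : MemLp (fun ζ : ℝ => (ζ : ℂ) * ((Real.exp |ζ| : ℝ) : ℂ) * ψhat ζ) 2
      (volume : Measure ℝ))
    (C₃ C : ℝ) (hC₃ : 0 < C₃) (hC : 0 < C)
    (hχφ : MemLp χφ 2 (volume : Measure ℝ)) (hχψ : MemLp χψ 2 (volume : Measure ℝ))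
    (hχφn : Real.sqrt (∫ ζ : ℝ, ‖χφ ζ - φhat ζ‖ ^ 2) < C₃ * ε)
    (hχψn : Real.sqrt (∫ ζ : ℝ, ‖χψ ζ - ψhat ζ‖ ^ 2) < C * Real.sqrt ε) :
    Real.sqrt (∫ ζ : ℝ, ∫ y in Set.Ioo (0 : ℝ) 1,
        ‖aleph (fun z => if |z| < (1 / 6) * Real.log (1 / ε) then χφ z else 0)
            (fun z => if |z| < (1 / 6) * Real.log (1 / ε) then χψ z else 0) ζ y -
          aleph φhat ψhat ζ y‖ ^ 2) <
      (Real.sqrt (C₃ ^ 2 +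
            36 * ∫ ζ : ℝ, ‖(ζ : ℂ) * φhat ζ * ((Real.exp |ζ| : ℝ) : ℂ)‖ ^ 2) +
          Real.sqrt (C ^ 2 +
            36 * ∫ ζ : ℝ, ‖(ζ : ℂ) * ψhat ζ * ((Real.exp |ζ| : ℝ) : ℂ)‖ ^ 2)) *
        (Real.log (1 / ε))⁻¹ := by
  have hε : ε < 1 := hε1.trans (Real.exp_lt_one_iff.2 (by norm_num))
  have le_sqrt : ε ≤ Real.sqrt ε := Real.le_sqrt_of_sq_le (by nlinarith)
  exact regularized_cauchy_laplace_estimate_general hε0 hε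
    (hχφ.sub (memLp_of_memLp_exp_abs_mul hφe)) (hχψ.sub (memLp_of_memLp_exp_abs_mul hψe)) hφz hψz
    (hχφn.trans_le (by gcongr)) hχψn
end
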